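/- arXiv:1702.06654 — 6 statements merged into one kernel-verified Lean document; each statement's English description precedes it below -/
import Mathlib

section
/- Let d ≥ 1 be an integer, α ∈ (0,1), and let f, g : ℝ^d → ℝ be bounded, Lipschitz and integrable. Then f·Lg and (Lf)·g are integrable on ℝ^d and ∫_{ℝ^d} f(x) Lg(x) dx = ∫_{ℝ^d} Lf(x) g(x) dx, i.e. the singular-integral fractional Laplacian is symmetric. -/
open MeasureTheory Real Set

noncomputable section

/-- The singular-integral fractional Laplacian
`Lφ(x) = ∫_{ℝ^d} (φ(x) - φ(x+z)) / |z|^{d+α} dz`. -/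
def fracLap (d : ℕ) (α : ℝ) (φ : EuclideanSpace ℝ (Fin d) → ℝ)
    (x : EuclideanSpace ℝ (Fin d)) : ℝ :=
  ∫ z : EuclideanSpace ℝ (Fin d), (φ x - φ (x + z)) / ‖z‖ ^ ((d : ℝ) + α)

lemma kernel_integrable (d : ℕ) (hd : 1 ≤ d) (α : ℝ) (hα : α ∈ Set.Ioo (0 : ℝ) 1) (M B : ℝ)
    (hM : 0 ≤ M) (hB : 0 ≤ B) :
    Integrable (fun z : EuclideanSpace ℝ (Fin d) => min (M * ‖z‖) B / ‖z‖ ^ ((d : ℝ) + α)) := by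
  have : Nonempty (Fin d) := ⟨⟨0, hd⟩⟩
  obtain ⟨h0, h1⟩ := hα
  have key := (integrable_fun_norm_addHaar (volume : Measure (EuclideanSpace ℝ (Fin d)))
    (f := fun y : ℝ => min (M * y) B / y ^ ((d : ℝ) + α))).1
  refine (integrable_fun_norm_addHaar (volume : Measure (EuclideanSpace ℝ (Fin d)))
    (f := fun y : ℝ => min (M * y) B / y ^ ((d : ℝ) + α))).2 ?_
  clear key
  have hmeas : Measurable (fun y : ℝ => y ^ (Module.finrank ℝ (EuclideanSpace ℝ (Fin d)) - 1) •
      (min (M * y) B / y ^ ((d : ℝ) + α))) := by fun_prop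
  have hpow : ∀ y : ℝ, 0 < y → y ^ (d - 1) * (y ^ ((d : ℝ) + α))⁻¹ = y ^ (-1 - α) := by
    intro y hy
    rw [← Real.rpow_natCast, ← Real.rpow_neg hy.le, ← Real.rpow_add hy]
    congr 1
    push_cast [hd]
    ring
  rw [← Set.Ioc_union_Ioi_eq_Ioi (zero_le_one' ℝ)]
  refine IntegrableOn.union ?_ ?_
  · have hi : IntegrableOn (fun y : ℝ => M * y ^ (-α)) (Set.Ioc 0 1) := by
      have := (intervalIntegral.intervalIntegrable_rpow' (a := 0) (b := 1) (r := -α) (by linarith))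
      rw [intervalIntegrable_iff_integrableOn_Ioc_of_le zero_le_one] at this
      exact this.const_mul M
    refine Integrable.mono' hi hmeas.aestronglyMeasurable ?_
    filter_upwards [ae_restrict_mem measurableSet_Ioc] with y hy
    have hy0 : 0 < y := hy.1
    have e : y ^ (-α) = y * y ^ (-1 - α) := by
      nth_rewrite 2 [← Real.rpow_one y]
      rw [← Real.rpow_add hy0]; congr 1; ring
    rw [finrank_euclideanSpace_fin, smul_eq_mul, Real.norm_of_nonneg (by positivity), div_eq_mul_inv,
      mul_left_comm, hpow y hy0, e, ← mul_assoc]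
    gcongr
    exact min_le_left _ _
  · have hi : IntegrableOn (fun y : ℝ => B * y ^ (-1 - α)) (Set.Ioi 1) :=
      (integrableOn_Ioi_rpow_of_lt (by linarith) one_pos).const_mul B
    refine Integrable.mono' hi hmeas.aestronglyMeasurable ?_
    filter_upwards [ae_restrict_mem measurableSet_Ioi] with y hy
    have hy0 : 0 < y := lt_trans one_pos hy
    rw [finrank_euclideanSpace_fin, smul_eq_mul, Real.norm_of_nonneg (by positivity), div_eq_mul_inv,
      mul_left_comm, hpow y hy0]
    gcongr
    exact min_le_right _ _

lemma prod_integrable (d : ℕ) (hd : 1 ≤ d) (α : ℝ) (hα : α ∈ Set.Ioo (0 : ℝ) 1)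
    (f g : EuclideanSpace ℝ (Fin d) → ℝ) (hf : Continuous f)
    (hgbd : ∃ B : ℝ, ∀ x, |g x| ≤ B) (hgLip : ∃ M : NNReal, LipschitzWith M g)
    (hfint : Integrable f) :
    Integrable (fun p : EuclideanSpace ℝ (Fin d) × EuclideanSpace ℝ (Fin d) =>
      f p.1 * ((g p.1 - g (p.1 + p.2)) / ‖p.2‖ ^ ((d : ℝ) + α))) (volume.prod volume) := by
  obtain ⟨B, hB⟩ := hgbd
  obtain ⟨M, hM⟩ := hgLip
  have hB0 : 0 ≤ B := (abs_nonneg _).trans (hB 0)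
  have hk := kernel_integrable d hd α hα M (B + B) M.2 (by positivity)
  have hg := hM.continuous
  have hfm := hf.measurable
  have hgm := hg.measurable
  refine Integrable.mono' (hfint.norm.mul_prod hk) (Measurable.aestronglyMeasurable (by fun_prop)) ?_
  refine Filter.Eventually.of_forall fun p => ?_
  have hn : 0 ≤ ‖p.2‖ ^ ((d : ℝ) + α) := by positivity
  rw [norm_mul, norm_div, Real.norm_of_nonneg hn]
  gcongr
  refine le_min ?_ ?_
  · have := hM.dist_le_mul p.1 (p.1 + p.2)
    rwa [dist_eq_norm, dist_self_add_right] at this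
  · rw [Real.norm_eq_abs]
    exact (abs_sub _ _).trans (add_le_add (hB _) (hB _))

/-- For `α ∈ (0,1)` and bounded Lipschitz integrable
`f, g : ℝ^d → ℝ`, the functions `f·Lg` and `(Lf)·g` are integrable and
`∫ f·Lg = ∫ (Lf)·g`: the singular-integral fractional Laplacian is symmetric. -/
theorem fracLap_symmetric
    (d : ℕ) (hd : 1 ≤ d) (α : ℝ) (hα : α ∈ Set.Ioo (0 : ℝ) 1)
    (f g : EuclideanSpace ℝ (Fin d) → ℝ)
    (hfbd : ∃ B : ℝ, ∀ x, |f x| ≤ B) (hgbd : ∃ B : ℝ, ∀ x, |g x| ≤ B)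
    (hfLip : ∃ M : NNReal, LipschitzWith M f) (hgLip : ∃ M : NNReal, LipschitzWith M g)
    (hfint : Integrable f) (hgint : Integrable g) :
    Integrable (fun x => f x * fracLap d α g x) ∧
    Integrable (fun x => fracLap d α f x * g x) ∧
    (∫ x : EuclideanSpace ℝ (Fin d), f x * fracLap d α g x) =
      ∫ x : EuclideanSpace ℝ (Fin d), fracLap d α f x * g x := by
  have hfc : Continuous f := hfLip.elim fun _ h => h.continuous
  have hgc : Continuous g := hgLip.elim fun _ h => h.continuous
  have h1 := prod_integrable d hd α hα f g hfc hgbd hgLip hfint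
  have h2 := prod_integrable d hd α hα g f hgc hfbd hfLip hgint
  have e1 : ∀ x, f x * fracLap d α g x =
      ∫ z, f x * ((g x - g (x + z)) / ‖z‖ ^ ((d : ℝ) + α)) := fun x => by
    rw [fracLap, integral_const_mul]
  have e2 : ∀ x, fracLap d α f x * g x =
      ∫ z, g x * ((f x - f (x + z)) / ‖z‖ ^ ((d : ℝ) + α)) := fun x => by
    rw [fracLap, integral_const_mul, mul_comm]
  simp only [e1, e2]
  refine ⟨h1.integral_prod_left, h2.integral_prod_left, ?_⟩
  rw [← sub_eq_zero, integral_integral h1, integral_integral h2, ← integral_sub h1 h2]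
  refine (integral_prod_symm _ (h1.sub h2)).trans ?_
  set D : EuclideanSpace ℝ (Fin d) → ℝ := fun z => ∫ x,
    (f x * ((g x - g (x + z)) / ‖z‖ ^ ((d : ℝ) + α)) -
      g x * ((f x - f (x + z)) / ‖z‖ ^ ((d : ℝ) + α))) with hD
  have hodd : ∀ z, D (-z) = - D z := by
    intro z
    simp only [hD]
    rw [← integral_neg, ← integral_add_right_eq_self _ z]
    refine integral_congr_ae (Filter.Eventually.of_forall fun x => ?_)
    simp only [add_neg_cancel_right, norm_neg]
    ring
  have h3 : ∫ z, D z = - ∫ z, D z := by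
    rw [← integral_neg, ← integral_neg_eq_self D]
    simp only [hodd]
  change ∫ z, D z = 0
  linarith
end
end

section
/- Let d ≥ 1 be an integer, α ∈ (0,1), let u : ℝ^d → ℝ be bounded and Lipschitz, and let η : ℝ → ℝ be convex and differentiable. Then η∘u is bounded and Lipschitz, so L(η∘u) is defined pointwise, and for every x ∈ ℝ^d one has L(η∘u)(x) ≤ η'(u(x)) · Lu(x). In particular the kinetic defect θ'(u(x))·(−Δ)^{α/2}u(x) − (−Δ)^{α/2}θ(u)(x) is nonnegative for every convex differentiable entropy θ. -/
open MeasureTheory Real Set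

noncomputable section

lemma tangent_aux (η : ℝ → ℝ) (hconv : ConvexOn ℝ Set.univ η) (hdiff : Differentiable ℝ η)
    (a b : ℝ) : η a - η b ≤ deriv η a * (a - b) := by
  rcases lt_trichotomy a b with h | h | h
  · have := hconv.deriv_le_slope (mem_univ a) (mem_univ b) h (hdiff a)
    rw [slope_def_field, le_div_iff₀ (by linarith)] at this
    linarith
  · simp [h]
  · have := hconv.slope_le_deriv (mem_univ b) (mem_univ a) h (hdiff a)
    rw [slope_def_field, div_le_iff₀ (by linarith)] at this
    linarith

lemma kernel_aux (d : ℕ) (hd : 1 ≤ d) (α : ℝ) (hα : α ∈ Set.Ioo (0 : ℝ) 1) :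
    Integrable (fun z : EuclideanSpace ℝ (Fin d) => min ‖z‖ 1 / ‖z‖ ^ ((d : ℝ) + α)) := by
  haveI : Nonempty (Fin d) := ⟨⟨0, hd⟩⟩
  have key := integrable_fun_norm_addHaar (E := EuclideanSpace ℝ (Fin d)) volume
    (f := fun r : ℝ => min r 1 / r ^ ((d : ℝ) + α))
  refine key.2 ?_
  have hcast : ((d - 1 : ℕ) : ℝ) = (d : ℝ) - 1 := by push_cast [hd]; ring
  have hpow : ∀ r : ℝ, 0 < r → r ^ (d - 1) / r ^ ((d : ℝ) + α) = r ^ (-1 - α) := by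
    intro r hr
    rw [← Real.rpow_natCast, ← Real.rpow_sub hr, hcast]
    congr 1
    ring
  simp only [finrank_euclideanSpace, Fintype.card_fin, smul_eq_mul]
  rw [← Ioc_union_Ioi_eq_Ioi (zero_le_one (α := ℝ))]
  refine IntegrableOn.union ?_ ?_
  · have h1 : IntegrableOn (fun r : ℝ => r ^ (-α)) (Ioc 0 1) := by
      have := intervalIntegral.intervalIntegrable_rpow' (a := 0) (b := 1) (r := -α)
        (by linarith [hα.2])
      rwa [intervalIntegrable_iff_integrableOn_Ioc_of_le zero_le_one] at this
    refine h1.congr_fun ?_ measurableSet_Ioc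
    intro r hr
    simp only
    rw [min_eq_left hr.2, mul_div_left_comm, hpow r hr.1]
    nth_rewrite 2 [← Real.rpow_one r]
    rw [← Real.rpow_add hr.1]
    congr 1
    ring
  · have h1 : IntegrableOn (fun r : ℝ => r ^ (-1 - α)) (Ioi 1) :=
      integrableOn_Ioi_rpow_of_lt (by linarith [hα.1]) one_pos
    refine h1.congr_fun ?_ measurableSet_Ioi
    intro r hr
    have hr' : (1 : ℝ) < r := hr
    simp only
    rw [min_eq_right hr'.le, ← hpow r (by linarith)]
    ring

lemma integrable_aux (d : ℕ) (hd : 1 ≤ d) (α : ℝ) (hα : α ∈ Set.Ioo (0 : ℝ) 1)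
    (u : EuclideanSpace ℝ (Fin d) → ℝ)
    (hubd : ∃ B : ℝ, ∀ x, |u x| ≤ B) (huLip : ∃ M : NNReal, LipschitzWith M u)
    (x : EuclideanSpace ℝ (Fin d)) :
    Integrable (fun z : EuclideanSpace ℝ (Fin d) =>
      (u x - u (x + z)) / ‖z‖ ^ ((d : ℝ) + α)) := by
  obtain ⟨B, hB⟩ := hubd
  obtain ⟨M, hM⟩ := huLip
  have hB0 : 0 ≤ B := (abs_nonneg _).trans (hB 0)
  refine ((kernel_aux d hd α hα).const_mul (M + 2 * B)).mono' ?_ ?_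
  · have hc := hM.continuous
    have : Measurable (fun z : EuclideanSpace ℝ (Fin d) => u x - u (x + z)) :=
      Continuous.measurable (by fun_prop)
    exact (this.div (measurable_norm.pow_const _)).aestronglyMeasurable
  · refine Filter.Eventually.of_forall fun z => ?_
    have hp : 0 ≤ ‖z‖ ^ ((d : ℝ) + α) := by positivity
    rw [norm_div, Real.norm_eq_abs, Real.norm_of_nonneg hp, ← mul_div_assoc]
    refine div_le_div_of_nonneg_right ?_ hp
    have h1 : |u x - u (x + z)| ≤ M * ‖z‖ := by
      have := hM.dist_le_mul x (x + z)
      simpa [Real.dist_eq] using this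
    have h2 : |u x - u (x + z)| ≤ 2 * B := by
      have := abs_sub (u x) (u (x + z))
      linarith [hB x, hB (x + z)]
    have hM0 : (0 : ℝ) ≤ M := M.2
    rcases le_total ‖z‖ 1 with h | h
    · rw [min_eq_left h]
      nlinarith [norm_nonneg z, mul_nonneg hB0 (norm_nonneg z)]
    · rw [min_eq_right h]
      linarith

/-- For `α ∈ (0,1)`, `u : ℝ^d → ℝ` bounded Lipschitz, and
`η : ℝ → ℝ` convex and differentiable, the composition `η ∘ u` is bounded and
Lipschitz, and the convexity (Kato-type) inequality
`L(η∘u)(x) ≤ η'(u(x)) · Lu(x)` holds for every `x`. -/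
theorem fracLap_convex_entropy_inequality
    (d : ℕ) (hd : 1 ≤ d) (α : ℝ) (hα : α ∈ Set.Ioo (0 : ℝ) 1)
    (u : EuclideanSpace ℝ (Fin d) → ℝ)
    (hubd : ∃ B : ℝ, ∀ x, |u x| ≤ B) (huLip : ∃ M : NNReal, LipschitzWith M u)
    (η : ℝ → ℝ) (hconv : ConvexOn ℝ Set.univ η) (hdiff : Differentiable ℝ η) :
    (∃ B : ℝ, ∀ x, |η (u x)| ≤ B) ∧
    (∃ M : NNReal, LipschitzWith M (fun x => η (u x))) ∧
    ∀ x : EuclideanSpace ℝ (Fin d),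
      fracLap d α (fun y => η (u y)) x ≤ deriv η (u x) * fracLap d α u x := by
  obtain ⟨B, hB⟩ := hubd
  obtain ⟨M, hM⟩ := huLip
  have hb : ∃ C : ℝ, ∀ x, |η (u x)| ≤ C := by
    obtain ⟨C, hC⟩ := (isCompact_Icc (a := -B) (b := B)).exists_bound_of_continuousOn
      hdiff.continuous.continuousOn
    exact ⟨C, fun x => hC (u x) (abs_le.1 (hB x))⟩
  have hl : ∃ M : NNReal, LipschitzWith M (fun x => η (u x)) := by
    have hmono : Monotone (deriv η) :=
      monotoneOn_univ.1 (hconv.monotoneOn_deriv fun x _ => hdiff x)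
    set K : ℝ := |deriv η (-B)| + |deriv η B| with hK
    have hK0 : 0 ≤ K := by positivity
    have hd' : ∀ x, |deriv η (u x)| ≤ K := by
      intro x
      have h := abs_le.1 (hB x)
      have h1 := hmono h.1
      have h2 := hmono h.2
      rw [abs_le]
      constructor
      · linarith [neg_abs_le (deriv η (-B)), abs_nonneg (deriv η B)]
      · linarith [le_abs_self (deriv η B), abs_nonneg (deriv η (-B))]
    have hone : ∀ x y, η (u x) - η (u y) ≤ K * (M * dist x y) := by
      intro x y
      have hu := hM.dist_le_mul x y
      rw [Real.dist_eq] at hu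
      calc η (u x) - η (u y) ≤ deriv η (u x) * (u x - u y) := tangent_aux η hconv hdiff _ _
        _ ≤ |deriv η (u x)| * |u x - u y| := by rw [← abs_mul]; exact le_abs_self _
        _ ≤ K * (M * dist x y) := mul_le_mul (hd' x) hu (abs_nonneg _) hK0
    refine ⟨⟨K, hK0⟩ * M, LipschitzWith.of_dist_le_mul fun x y => ?_⟩
    rw [Real.dist_eq, abs_le]
    have h1 := hone x y
    have h2 := hone y x
    rw [dist_comm y x] at h2
    push_cast
    change -(K * M * dist x y) ≤ _ ∧ _ ≤ K * M * dist x y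
    constructor <;> nlinarith
  refine ⟨hb, hl, fun x => ?_⟩
  unfold fracLap
  rw [← integral_const_mul]
  refine integral_mono (integrable_aux d hd α hα _ hb hl x)
    ((integrable_aux d hd α hα u ⟨B, hB⟩ ⟨M, hM⟩ x).const_mul _) fun z => ?_
  have hp : 0 ≤ ‖z‖ ^ ((d : ℝ) + α) := by positivity
  simp only
  rw [← mul_div_assoc]
  exact div_le_div_of_nonneg_right (tangent_aux η hconv hdiff _ _) hp
end
end

section
/- Let d ≥ 1 be an integer, α ∈ (0,1), let u : ℝ^d → ℝ be bounded and Lipschitz, and let v ∈ ℝ. Then the function x ↦ |u(x) − v| is bounded and Lipschitz, so L(|u − v|) is defined pointwise, and for every x ∈ ℝ^d one has L(|u − v|)(x) ≤ sgn(u(x) − v) · Lu(x), where sgn(t) equals 1 for t > 0, −1 for t < 0, and 0 for t = 0. -/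
open MeasureTheory Real Set

noncomputable section

/-- The integrand defining `fracLap` is integrable for bounded Lipschitz functions. -/
theorem fracLap_integrable (d : ℕ) (hd : 1 ≤ d) (α : ℝ) (hα : α ∈ Set.Ioo (0 : ℝ) 1)
    (φ : EuclideanSpace ℝ (Fin d) → ℝ)
    (hbd : ∃ B : ℝ, ∀ x, |φ x| ≤ B) (hLip : ∃ M : NNReal, LipschitzWith M φ)
    (x : EuclideanSpace ℝ (Fin d)) :
    Integrable (fun z : EuclideanSpace ℝ (Fin d) =>
      (φ x - φ (x + z)) / ‖z‖ ^ ((d : ℝ) + α)) := by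
  obtain ⟨B, hB⟩ := hbd
  obtain ⟨M, hM⟩ := hLip
  obtain ⟨h0, h1⟩ := hα
  have hs : 0 < (d : ℝ) + α := by positivity
  have hmeas : Measurable (fun z : EuclideanSpace ℝ (Fin d) =>
      (φ x - φ (x + z)) / ‖z‖ ^ ((d : ℝ) + α)) := by
    have hc : Measurable φ := hM.continuous.measurable
    fun_prop
  have hin : IntegrableOn (fun z : EuclideanSpace ℝ (Fin d) =>
      (φ x - φ (x + z)) / ‖z‖ ^ ((d : ℝ) + α)) (Metric.ball 0 1) := by
    refine integrableOn_ball_of_norm_le_rpow (C := M) (α := (d : ℝ) + α - 1) (by simpa using hd)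
      (by simp; linarith) (Filter.Eventually.of_forall fun z => ?_) hmeas.aestronglyMeasurable
    by_cases hz : z = 0
    · subst hz
      simp only [add_zero, sub_self, zero_div, norm_zero]
      positivity
    have hz' : 0 < ‖z‖ := norm_pos_iff.mpr hz
    have h := hM.dist_le_mul x (x + z)
    rw [Real.dist_eq, dist_self_add_right] at h
    rw [norm_div, Real.norm_eq_abs, Real.norm_of_nonneg (by positivity : 0 ≤ ‖z‖ ^ ((d : ℝ) + α)),
      div_le_iff₀ (by positivity), mul_assoc, ← Real.rpow_add hz']
    have : -((d : ℝ) + α - 1) + ((d : ℝ) + α) = 1 := by ring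
    rwa [this, Real.rpow_one]
  have hout : IntegrableOn (fun z : EuclideanSpace ℝ (Fin d) =>
      (φ x - φ (x + z)) / ‖z‖ ^ ((d : ℝ) + α)) (Metric.ball 0 1)ᶜ := by
    have hj : Integrable (fun z : EuclideanSpace ℝ (Fin d) =>
        (2 * B * 2 ^ ((d : ℝ) + α)) * (1 + ‖z‖) ^ (-((d : ℝ) + α))) :=
      (integrable_one_add_norm (by simp; linarith)).const_mul _
    refine Integrable.mono' hj.integrableOn hmeas.aestronglyMeasurable ?_
    refine (ae_restrict_iff' Metric.isOpen_ball.measurableSet.compl).mpr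
      (Filter.Eventually.of_forall fun z hz => ?_)
    have hz1 : 1 ≤ ‖z‖ := by simpa using hz
    have hz' : 0 < ‖z‖ := by linarith
    have hB0 : 0 ≤ B := (abs_nonneg _).trans (hB x)
    have h2 : |φ x - φ (x + z)| ≤ 2 * B := by
      have := abs_sub (φ x) (φ (x + z))
      linarith [hB x, hB (x + z)]
    have h3 : (1 + ‖z‖) ^ ((d : ℝ) + α) ≤ 2 ^ ((d : ℝ) + α) * ‖z‖ ^ ((d : ℝ) + α) := by
      rw [← Real.mul_rpow (by norm_num) hz'.le]
      exact Real.rpow_le_rpow (by positivity) (by linarith) hs.le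
    rw [norm_div, Real.norm_eq_abs, Real.norm_of_nonneg (by positivity : 0 ≤ ‖z‖ ^ ((d : ℝ) + α)),
      Real.rpow_neg (by positivity), ← div_eq_mul_inv, div_le_div_iff₀ (by positivity)
      (by positivity), mul_assoc (2 * B)]
    exact mul_le_mul h2 h3 (by positivity) (by positivity)
  have := hin.union hout
  rwa [Set.union_compl_self, integrableOn_univ] at this

/-- Kato-type inequality: for `α ∈ (0,1)`, `u : ℝ^d → ℝ` bounded
Lipschitz and `v ∈ ℝ`, the function `x ↦ |u(x) - v|` is bounded and Lipschitz, and
`L(|u - v|)(x) ≤ sgn(u(x) - v) · Lu(x)` for every `x`, where `sgn` is `Real.sign`. -/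
theorem fracLap_kato_inequality
    (d : ℕ) (hd : 1 ≤ d) (α : ℝ) (hα : α ∈ Set.Ioo (0 : ℝ) 1)
    (u : EuclideanSpace ℝ (Fin d) → ℝ)
    (hubd : ∃ B : ℝ, ∀ x, |u x| ≤ B) (huLip : ∃ M : NNReal, LipschitzWith M u)
    (v : ℝ) :
    (∃ B : ℝ, ∀ x, |(|u x - v|)| ≤ B) ∧
    (∃ M : NNReal, LipschitzWith M (fun x => |u x - v|)) ∧
    ∀ x : EuclideanSpace ℝ (Fin d),
      fracLap d α (fun y => |u y - v|) x ≤ Real.sign (u x - v) * fracLap d α u x := by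
  obtain ⟨B, hB⟩ := id hubd
  obtain ⟨M, hM⟩ := id huLip
  have hb : ∃ B : ℝ, ∀ x, |(|u x - v|)| ≤ B := by
    refine ⟨B + |v|, fun x => ?_⟩
    rw [abs_abs]
    have := abs_sub (u x) v
    linarith [hB x]
  have hl : ∃ M : NNReal, LipschitzWith M (fun x => |u x - v|) := by
    refine ⟨M, LipschitzWith.of_dist_le_mul fun x y => ?_⟩
    refine le_trans ?_ (hM.dist_le_mul x y)
    rw [Real.dist_eq, Real.dist_eq]
    have := abs_abs_sub_abs_le_abs_sub (u x - v) (u y - v)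
    simpa using this
  refine ⟨hb, hl, fun x => ?_⟩
  unfold fracLap
  rw [← integral_const_mul]
  refine integral_mono (fracLap_integrable d hd α hα _ hb hl x)
    ((fracLap_integrable d hd α hα u hubd huLip x).const_mul _) fun z => ?_
  simp only
  rw [← mul_div_assoc]
  refine div_le_div_of_nonneg_right ?_ (by positivity)
  rcases lt_trichotomy (u x - v) 0 with h | h | h
  · rw [Real.sign_of_neg h, abs_of_neg h]
    linarith [neg_abs_le (u (x + z) - v)]
  · rw [h, Real.sign_zero, abs_zero]
    linarith [abs_nonneg (u (x + z) - v)]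
  · rw [Real.sign_of_pos h, abs_of_pos h]
    linarith [le_abs_self (u (x + z) - v)]
end
end

section
/- Let d ≥ 1 be an integer, α ∈ (0,1), let u : ℝ^d → ℝ be bounded and Lipschitz, assume that (x,z) ↦ |u(x) − u(x+z)| / |z|^{d+α} is integrable on ℝ^d × ℝ^d, and let η : ℝ → ℝ be convex and differentiable. Then x ↦ η'(u(x)) · Lu(x) is integrable on ℝ^d and ∫_{ℝ^d} η'(u(x)) · Lu(x) dx ≥ 0. -/
open MeasureTheory Real Set

noncomputable section

/-- Entropy production: for `α ∈ (0,1)`, `u : ℝ^d → ℝ` bounded and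
Lipschitz with `(x,z) ↦ |u(x) - u(x+z)|/|z|^{d+α}` integrable on `ℝ^d × ℝ^d`, and
`η : ℝ → ℝ` convex differentiable, the function `x ↦ η'(u(x))·Lu(x)` is integrable
and `∫ η'(u(x))·Lu(x) dx ≥ 0`. -/
theorem fracLap_entropy_production
    (d : ℕ) (hd : 1 ≤ d) (α : ℝ) (hα : α ∈ Set.Ioo (0 : ℝ) 1)
    (u : EuclideanSpace ℝ (Fin d) → ℝ)
    (hubd : ∃ B : ℝ, ∀ x, |u x| ≤ B) (huLip : ∃ M : NNReal, LipschitzWith M u)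
    (hprod : Integrable (fun p : EuclideanSpace ℝ (Fin d) × EuclideanSpace ℝ (Fin d) =>
        |u p.1 - u (p.1 + p.2)| / ‖p.2‖ ^ ((d : ℝ) + α)))
    (η : ℝ → ℝ) (hconv : ConvexOn ℝ Set.univ η) (hdiff : Differentiable ℝ η) :
    Integrable (fun x => deriv η (u x) * fracLap d α u x) ∧
    0 ≤ ∫ x : EuclideanSpace ℝ (Fin d), deriv η (u x) * fracLap d α u x := by
  obtain ⟨B, hB⟩ := hubd
  obtain ⟨M, hM⟩ := huLip
  have huc : Continuous u := hM.continuous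
  have hmono : Monotone (deriv η) := by
    have h := hconv.monotoneOn_deriv (fun x _ => hdiff x)
    exact monotoneOn_univ.mp h
  set F : EuclideanSpace ℝ (Fin d) × EuclideanSpace ℝ (Fin d) → ℝ := fun p =>
    deriv η (u p.1) * ((u p.1 - u (p.1 + p.2)) / ‖p.2‖ ^ ((d : ℝ) + α)) with hF
  have hnum : Measurable (fun p : EuclideanSpace ℝ (Fin d) × EuclideanSpace ℝ (Fin d) =>
      u p.1 - u (p.1 + p.2)) :=
    (Continuous.sub (huc.comp continuous_fst)
      (huc.comp (continuous_fst.add continuous_snd))).measurable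
  have hden : Measurable (fun p : EuclideanSpace ℝ (Fin d) × EuclideanSpace ℝ (Fin d) =>
      ‖p.2‖ ^ ((d : ℝ) + α)) := measurable_snd.norm.pow_const _
  have hFm : Measurable F :=
    (hmono.measurable.comp (huc.measurable.comp measurable_fst)).mul (hnum.div hden)
  have hFi : Integrable F := by
    refine (hprod.const_mul (max |deriv η (-B)| |deriv η B|)).mono' hFm.aestronglyMeasurable
      (Filter.Eventually.of_forall fun p => ?_)
    have hb := abs_le.mp (hB p.1)
    have h1 : |deriv η (u p.1)| ≤ max |deriv η (-B)| |deriv η B| :=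
      abs_le_max_abs_abs (hmono hb.1) (hmono hb.2)
    have h2 : (0 : ℝ) ≤ ‖p.2‖ ^ ((d : ℝ) + α) := Real.rpow_nonneg (norm_nonneg _) _
    simp only [hF, Real.norm_eq_abs, abs_mul, abs_div, abs_of_nonneg h2]
    exact mul_le_mul_of_nonneg_right h1 (div_nonneg (abs_nonneg _) h2)
  have hFx : ∀ x, ∫ z, F (x, z) = deriv η (u x) * fracLap d α u x := fun x => by
    simp only [hF, fracLap]
    exact integral_const_mul _ _
  have hT : MeasurePreserving
      (fun p : EuclideanSpace ℝ (Fin d) × EuclideanSpace ℝ (Fin d) => (p.1 + p.2, -p.2))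
      volume volume :=
    (measurePreserving_add_prod_neg (volume : Measure (EuclideanSpace ℝ (Fin d)))
      (volume : Measure (EuclideanSpace ℝ (Fin d)))).comp Measure.measurePreserving_swap
  have hFTi : Integrable (fun p : EuclideanSpace ℝ (Fin d) × EuclideanSpace ℝ (Fin d) =>
      F (p.1 + p.2, -p.2)) := hT.integrable_comp_of_integrable hFi
  have hFT : ∫ p : EuclideanSpace ℝ (Fin d) × EuclideanSpace ℝ (Fin d),
      F (p.1 + p.2, -p.2) = ∫ p, F p := by
    conv_rhs => rw [← hT.map_eq]
    exact (integral_map hT.aemeasurable hFm.aestronglyMeasurable).symm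
  have hpos : 0 ≤ ∫ p, (F p + F (p.1 + p.2, -p.2)) := by
    refine integral_nonneg fun p => ?_
    have h2 : (0 : ℝ) ≤ ‖p.2‖ ^ ((d : ℝ) + α) := Real.rpow_nonneg (norm_nonneg _) _
    have h3 : F p + F (p.1 + p.2, -p.2) =
        ((deriv η (u p.1) - deriv η (u (p.1 + p.2))) * (u p.1 - u (p.1 + p.2))) /
          ‖p.2‖ ^ ((d : ℝ) + α) := by
      simp only [hF, norm_neg, add_neg_cancel_right]
      ring
    show 0 ≤ F p + F (p.1 + p.2, -p.2)
    rw [h3]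
    refine div_nonneg ?_ h2
    rcases le_total (u p.1) (u (p.1 + p.2)) with h | h
    · exact mul_nonneg_of_nonpos_of_nonpos (sub_nonpos.mpr (hmono h)) (sub_nonpos.mpr h)
    · exact mul_nonneg (sub_nonneg.mpr (hmono h)) (sub_nonneg.mpr h)
  rw [integral_add hFi hFTi, hFT] at hpos
  have hfub : ∫ p, F p = ∫ x, ∫ z, F (x, z) := integral_prod F hFi
  have hint : Integrable (fun x => ∫ z, F (x, z)) := Integrable.integral_prod_left hFi
  simp only [hFx] at hfub hint
  exact ⟨hint, by linarith⟩
end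
end

section
/- Let (X, λ) be a finite measure space such that L¹(X, λ) is separable. Let (ν^n) be a sequence of Young measures on X satisfying, for some p ≥ 1, sup_n ∫_X ∫_ℝ |ξ|^p dν^n_z(ξ) dλ(z) < +∞. Then there exist a Young measure ν on X and a subsequence (still denoted (ν^n)) such that for every h ∈ L¹(X, λ) and every bounded continuous φ : ℝ → ℝ, lim_{n→∞} ∫_X h(z) ∫_ℝ φ(ξ) dν^n_z(ξ) dλ(z) = ∫_X h(z) ∫_ℝ φ(ξ) dν_z(ξ) dλ(z). -/
open MeasureTheory Filter
open scoped ENNReal Topology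

noncomputable section

/-- A Young measure on a measurable space `X`: a measurable family of Borel
probability measures on `ℝ` (measurability tested against bounded continuous
functions). -/
def IsYoungMeasure {X : Type*} [MeasurableSpace X] (ν : X → Measure ℝ) : Prop :=
  (∀ z, IsProbabilityMeasure (ν z)) ∧
  ∀ φ : BoundedContinuousFunction ℝ ℝ, Measurable fun z => ∫ ξ, φ ξ ∂(ν z)

lemma young_measurable {X : Type*} [MeasurableSpace X] (ν : X → Measure ℝ)
    (h : IsYoungMeasure ν) : Measurable ν := by
  have := h.1
  refine Measurable.measure_of_isPiSystem_of_isProbabilityMeasure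
    (borel_eq_generateFrom_isClosed (α := ℝ) ▸ BorelSpace.measurable_eq) isPiSystem_isClosed ?_
  intro F hF
  have hF : IsClosed F := hF
  refine measurable_of_tendsto_metrizable (f := fun n z => ∫⁻ x, hF.apprSeq n x ∂(ν z)) ?_
    (tendsto_pi_nhds.2 fun z => HasOuterApproxClosed.tendsto_lintegral_apprSeq hF (ν z))
  intro n
  let φ : BoundedContinuousFunction ℝ ℝ := BoundedContinuousFunction.ofNormedAddCommGroup
    (fun x => ((hF.apprSeq n x : NNReal) : ℝ)) (by fun_prop) 1 (by
      intro x
      simpa using HasOuterApproxClosed.apprSeq_apply_le_one hF n x)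
  have h1 : (fun z => ∫⁻ x, hF.apprSeq n x ∂(ν z)) = fun z => ENNReal.ofReal (∫ x, φ x ∂(ν z)) := by
    funext z
    rw [ofReal_integral_eq_lintegral_ofReal (φ.integrable _) (ae_of_all _ fun x => by
      simp [φ])] 
    simp [φ]
  rw [h1]
  exact (h.2 φ).ennreal_ofReal

lemma closed_step {X : Type*} [MeasurableSpace X] (P : Measure X)
    (ψ : ℕ → X → ℝ) (ψl : X → ℝ) (hm : ∀ k, Measurable (ψ k)) (hml : Measurable ψl)
    (B : ℝ) (hB : ∀ k x, |ψ k x| ≤ B) (hBl : ∀ x, |ψl x| ≤ B) (h : X → ℝ) (hh : Integrable h P)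
    (happ : ∀ ε > 0, ∃ g : X → ℝ, Integrable g P ∧ ∫ x, |h x - g x| ∂P < ε ∧
      Tendsto (fun k => ∫ x, g x * ψ k x ∂P) atTop (𝓝 (∫ x, g x * ψl x ∂P))) :
    Tendsto (fun k => ∫ x, h x * ψ k x ∂P) atTop (𝓝 (∫ x, h x * ψl x ∂P)) := by
  have key : ∀ (g : X → ℝ), Integrable g P → ∀ χ : X → ℝ, Measurable χ → (∀ x, |χ x| ≤ B) →
      |∫ x, h x * χ x ∂P - ∫ x, g x * χ x ∂P| ≤ (∫ x, |h x - g x| ∂P) * B := by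
    intro g hg χ hχ hχB
    have i1 : Integrable (fun x => h x * χ x) P :=
      hh.mul_bdd hχ.aestronglyMeasurable (ae_of_all _ hχB)
    have i2 : Integrable (fun x => g x * χ x) P :=
      hg.mul_bdd hχ.aestronglyMeasurable (ae_of_all _ hχB)
    rw [← integral_sub i1 i2, ← integral_mul_const]
    refine (abs_integral_le_integral_abs).trans ?_
    refine integral_mono (i1.sub i2).abs ((hh.sub hg).abs.mul_const B) fun x => ?_
    simp only [← sub_mul, abs_mul]
    exact mul_le_mul_of_nonneg_left (hχB x) (abs_nonneg _)
  rcases isEmpty_or_nonempty X with hX | ⟨⟨x0⟩⟩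
  · simp [Measure.eq_zero_of_isEmpty P]
  have hB0 : 0 ≤ B := (abs_nonneg _).trans (hBl x0)
  rw [Metric.tendsto_atTop]
  intro ε hε
  obtain ⟨g, hg, hlt, ht⟩ := happ (ε / (3 * (B + 1))) (by positivity)
  rw [Metric.tendsto_atTop] at ht
  obtain ⟨N, hN⟩ := ht (ε / 3) (by positivity)
  refine ⟨N, fun n hn => ?_⟩
  have a1 := key g hg (ψ n) (hm n) (hB n)
  have a2 := key g hg ψl hml hBl
  have a3 := hN n hn
  have a4 : (∫ x, |h x - g x| ∂P) * B ≤ ε / 3 := by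
    calc _ ≤ ε / (3 * (B + 1)) * (B + 1) := by
            gcongr
            linarith
      _ = ε / 3 := by field_simp
  rw [Real.dist_eq] at *
  rw [abs_le] at a1 a2
  rw [abs_lt] at *
  constructor <;> linarith

open ProbabilityTheory in
lemma core {X : Type*} [MeasurableSpace X] (P : Measure X) [IsProbabilityMeasure P]
    (T : X → ℕ → ℝ) (hT : Measurable T)
    (κ : ℕ → Kernel X ℝ) [∀ n, IsMarkovKernel (κ n)] (p : ℝ) (hp : 1 ≤ p) (C : ℝ≥0∞) (hC : C ≠ ⊤)
    (hmom : ∀ n, (∫⁻ z, (∫⁻ ξ, ENNReal.ofReal (|ξ| ^ p) ∂(κ n z)) ∂P) ≤ C) :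
    ∃ (η : Kernel X ℝ) (s : ℕ → ℕ), IsMarkovKernel η ∧ StrictMono s ∧
      ∀ (G : BoundedContinuousFunction (ℕ → ℝ) ℝ) (φ : BoundedContinuousFunction ℝ ℝ),
        Tendsto (fun k => ∫ z, G (T z) * ∫ ξ, φ ξ ∂(κ (s k) z) ∂P) atTop
          (𝓝 (∫ z, G (T z) * ∫ ξ, φ ξ ∂(η z) ∂P)) := by
  have hTi : Measurable (Prod.map T (id : ℝ → ℝ)) := hT.prodMap measurable_id
  let m : ProbabilityMeasure (ℕ → ℝ) := ⟨P.map T, Measure.isProbabilityMeasure_map hT.aemeasurable⟩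
  let π : ℕ → ProbabilityMeasure ((ℕ → ℝ) × ℝ) := fun n =>
    ⟨(P ⊗ₘ κ n).map (Prod.map T id), Measure.isProbabilityMeasure_map hTi.aemeasurable⟩
  have hfst : ∀ n, (π n : Measure ((ℕ → ℝ) × ℝ)).map Prod.fst = P.map T := by
    intro n
    show ((P ⊗ₘ κ n).map (Prod.map T id)).map Prod.fst = _
    rw [Measure.map_map measurable_fst hTi]
    have : Prod.fst ∘ Prod.map T (id : ℝ → ℝ) = T ∘ Prod.fst := rfl
    rw [this, ← Measure.map_map hT measurable_fst]
    congr 1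
    exact Measure.fst_compProd P (κ n)
  have htight : IsTightMeasureSet {((μ : ProbabilityMeasure ((ℕ → ℝ) × ℝ)) : Measure ((ℕ → ℝ) × ℝ)) | μ ∈ Set.range π} := by
    apply IsTightMeasureSet.prodMk
    · refine (isTightMeasureSet_singleton (μ := P.map T)).subset ?_
      rintro _ ⟨_, ⟨_, ⟨n, rfl⟩, rfl⟩, rfl⟩
      exact hfst n
    · rw [isTightMeasureSet_iff_exists_isCompact_measure_compl_le]
      intro ε hε
      obtain ⟨R, hR0, hR⟩ : ∃ R : ℝ, 0 < R ∧ C / ENNReal.ofReal (R ^ p) ≤ ε := by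
        have h1 : Tendsto (fun R : ℝ => C / ENNReal.ofReal (R ^ p)) atTop (𝓝 0) := by
          have := (ENNReal.tendsto_ofReal_atTop.comp (tendsto_rpow_atTop (by linarith : 0 < p)))
          have h2 := ENNReal.Tendsto.const_div this (a := C) (Or.inr hC)
          simpa using h2
        have h2 := (h1.eventually (ge_mem_nhds hε)).and (eventually_gt_atTop 0)
        obtain ⟨R, h3, h4⟩ := h2.exists
        exact ⟨R, h4, h3⟩
      refine ⟨Set.Icc (-R) R, isCompact_Icc, ?_⟩
      rintro _ ⟨_, ⟨_, ⟨n, rfl⟩, rfl⟩, rfl⟩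
      refine le_trans ?_ hR
      have hsnd : (π n : Measure ((ℕ → ℝ) × ℝ)).snd = (P ⊗ₘ κ n).snd := by
        show ((P ⊗ₘ κ n).map (Prod.map T id)).map Prod.snd = _
        rw [Measure.map_map measurable_snd hTi]
        rfl
      rw [hsnd]
      have hpos : 0 < R ^ p := by positivity
      rw [ENNReal.le_div_iff_mul_le (Or.inl (by simpa using hpos)) (Or.inl (by simp)), mul_comm]
      have hmeas : Measurable fun ξ : ℝ => ENNReal.ofReal (|ξ| ^ p) := by fun_prop
      calc _ ≤ ENNReal.ofReal (R ^ p) * (P ⊗ₘ κ n).snd {ξ | ENNReal.ofReal (R ^ p) ≤ ENNReal.ofReal (|ξ| ^ p)} := by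
            gcongr
            intro ξ hξ
            apply ENNReal.ofReal_le_ofReal
            have : R ≤ |ξ| := by
              by_contra! hlt
              exact hξ (abs_le.1 hlt.le)
            gcongr
        _ ≤ ∫⁻ ξ, ENNReal.ofReal (|ξ| ^ p) ∂(P ⊗ₘ κ n).snd := mul_meas_ge_le_lintegral hmeas _
        _ = ∫⁻ z, (∫⁻ ξ, ENNReal.ofReal (|ξ| ^ p) ∂(κ n z)) ∂P := by
            rw [Measure.snd, lintegral_map hmeas measurable_snd]
            exact Measure.lintegral_compProd (hmeas.comp measurable_snd)
        _ ≤ C := hmom n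
  have hcomp := isCompact_closure_of_isTightMeasureSet htight
  obtain ⟨ρ, -, s, hs, hlim⟩ := hcomp.tendsto_subseq (x := π) (fun n => subset_closure ⟨n, rfl⟩)
  have hρ : (ρ : Measure ((ℕ → ℝ) × ℝ)).fst = P.map T := by
    have h1 := (ProbabilityMeasure.continuous_map (continuous_fst (X := ℕ → ℝ) (Y := ℝ))).continuousAt.tendsto.comp hlim
    have h2 : Tendsto (fun _ : ℕ => m) atTop (𝓝 (ρ.map continuous_fst.aemeasurable)) := by
      refine h1.congr fun k => ?_
      apply Subtype.ext
      exact hfst _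
    have h3 := tendsto_nhds_unique h2 tendsto_const_nhds
    have h4 := congrArg (fun μ : ProbabilityMeasure (ℕ → ℝ) => (μ : Measure (ℕ → ℝ))) h3
    exact h4
  refine ⟨(ρ : Measure ((ℕ → ℝ) × ℝ)).condKernel.comap T hT, s, inferInstance, hs, ?_⟩
  intro G φ
  let F : BoundedContinuousFunction ((ℕ → ℝ) × ℝ) ℝ :=
    (G.compContinuous ⟨Prod.fst, continuous_fst⟩) * (φ.compContinuous ⟨Prod.snd, continuous_snd⟩)
  have hF := (ProbabilityMeasure.tendsto_iff_forall_integral_tendsto.1 hlim) F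
  have e1 : ∀ n, ∫ q, F q ∂(π n : Measure ((ℕ → ℝ) × ℝ)) = ∫ z, G (T z) * ∫ ξ, φ ξ ∂(κ n z) ∂P := by
    intro n
    show ∫ q, F q ∂((P ⊗ₘ κ n).map (Prod.map T id)) = _
    have hFs : AEStronglyMeasurable F ((P ⊗ₘ κ n).map (Prod.map T id)) :=
      F.continuous.aestronglyMeasurable
    rw [integral_map hTi.aemeasurable hFs, Measure.integral_compProd]
    · simp [F, integral_const_mul]
    · have : IsFiniteMeasure ((P ⊗ₘ κ n).map (Prod.map T id)) := inferInstance
      exact (F.integrable ((P ⊗ₘ κ n).map (Prod.map T id))).comp_measurable hTi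
  have e2 : ∫ q, F q ∂(ρ : Measure ((ℕ → ℝ) × ℝ)) = ∫ z, G (T z) * ∫ ξ, φ ξ ∂((ρ : Measure ((ℕ → ℝ) × ℝ)).condKernel.comap T hT z) ∂P := by
    have hd := (ρ : Measure ((ℕ → ℝ) × ℝ)).disintegrate (ρ : Measure ((ℕ → ℝ) × ℝ)).condKernel
    rw [hρ] at hd
    rw [← Measure.integral_condKernel (F.integrable _), hρ, integral_map hT.aemeasurable]
    · simp [F, integral_const_mul, Kernel.comap_apply]
    · exact F.continuous.stronglyMeasurable.integral_kernel_prod_right'.aestronglyMeasurable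
  rw [e2] at hF
  refine hF.congr fun k => ?_
  exact e1 (s k)

open ProbabilityTheory in
lemma young_prob {X : Type*} [MeasurableSpace X] (P : Measure X) [IsProbabilityMeasure P]
    (h : ℕ → X → ℝ) (hmeas : ∀ i, Measurable (h i)) (hint : ∀ i, Integrable (h i) P)
    (hdense : ∀ g : X → ℝ, Integrable g P → ∀ ε > 0, ∃ i, ∫ x, |g x - h i x| ∂P < ε)
    (p : ℝ) (hp : 1 ≤ p) (ν : ℕ → X → Measure ℝ)
    (hY : ∀ n, IsYoungMeasure (ν n)) (C : ℝ≥0∞) (hC : C ≠ ⊤)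
    (hmom : ∀ n, (∫⁻ z, (∫⁻ ξ, ENNReal.ofReal (|ξ| ^ p) ∂(ν n z)) ∂P) ≤ C) :
    ∃ (νl : X → Measure ℝ) (s : ℕ → ℕ), IsYoungMeasure νl ∧ StrictMono s ∧
      ∀ h : X → ℝ, Integrable h P → ∀ φ : BoundedContinuousFunction ℝ ℝ,
        Tendsto (fun k => ∫ z, h z * ∫ ξ, φ ξ ∂(ν (s k) z) ∂P) atTop
          (𝓝 (∫ z, h z * ∫ ξ, φ ξ ∂(νl z) ∂P)) := by
  let κ : ℕ → Kernel X ℝ := fun n => ⟨ν n, young_measurable _ (hY n)⟩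
  have : ∀ n, IsMarkovKernel (κ n) := fun n => ⟨(hY n).1⟩
  obtain ⟨η, s, hη, hs, hlim⟩ := core P (fun x i => h i x) (measurable_pi_lambda _ hmeas) κ p hp C hC hmom
  have hηm : ∀ φ : BoundedContinuousFunction ℝ ℝ, Measurable fun z => ∫ ξ, φ ξ ∂(η z) :=
    fun φ => (φ.continuous.stronglyMeasurable.integral_kernel (κ := η)).measurable
  refine ⟨η, s, ⟨fun z => inferInstance, hηm⟩, hs, ?_⟩
  intro g hg φ
  have hbd : ∀ μ : Measure ℝ, IsProbabilityMeasure μ → |∫ ξ, φ ξ ∂μ| ≤ ‖φ‖ := by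
    intro μ hμ
    exact φ.norm_integral_le_norm μ
  have step := closed_step P (fun k z => ∫ ξ, φ ξ ∂(ν (s k) z)) (fun z => ∫ ξ, φ ξ ∂(η z))
    (fun k => (hY _).2 φ) (hηm φ) ‖φ‖ (fun k x => hbd _ ((hY _).1 x)) (fun x => hbd _ inferInstance)
  apply step g hg
  intro ε hε
  obtain ⟨i, hi⟩ := hdense g hg ε hε
  refine ⟨h i, hint i, hi, ?_⟩
  apply step (h i) (hint i)
  intro ε hε
  -- truncation
  have hnn : ∀ (M : ℕ) (t : ℝ), |max (-(M : ℝ)) (min t M)| ≤ min (M : ℝ) |t| := by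
    intro M t
    have hM : (0 : ℝ) ≤ M := M.cast_nonneg
    rcases abs_cases t with ⟨h1, h2⟩ | ⟨h1, h2⟩ <;> rw [h1] <;> grind
  let G : ℕ → BoundedContinuousFunction (ℕ → ℝ) ℝ := fun M =>
    BoundedContinuousFunction.ofNormedAddCommGroup (fun y => max (-(M : ℝ)) (min (y i) M))
      (by fun_prop) (M : ℝ) (fun y => (hnn _ (y i)).trans (min_le_left _ _))
  have hGi : ∀ M : ℕ, Integrable (fun x => max (-(M : ℝ)) (min (h i x) M)) P := fun M =>
    (hint i).mono ((by have := hmeas i; fun_prop : Measurable fun x => max (-(M : ℝ)) (min (h i x) M)).aestronglyMeasurable)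
      (ae_of_all _ fun x => (hnn M (h i x)).trans (min_le_right _ _))
  have ht : Tendsto (fun M : ℕ => ∫ x, |h i x - max (-(M : ℝ)) (min (h i x) M)| ∂P) atTop (𝓝 (∫ x, 0 ∂P)) := by
    refine tendsto_integral_of_dominated_convergence (fun x => 2 * |h i x|) 
      (fun M => ((hint i).sub (hGi M)).abs.aestronglyMeasurable) ((hint i).abs.const_mul 2) ?_ ?_
    · intro M
      refine ae_of_all _ fun x => ?_
      have h1 := (hnn M (h i x)).trans (min_le_right _ _)
      have h2 := abs_sub (h i x) (max (-(M : ℝ)) (min (h i x) M))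
      rw [Real.norm_eq_abs, abs_abs]
      linarith
    · refine ae_of_all _ fun x => ?_
      obtain ⟨N, hN⟩ := exists_nat_ge |h i x|
      refine tendsto_const_nhds.congr' ?_
      filter_upwards [eventually_ge_atTop N] with M hM
      have hM' : |h i x| ≤ M := hN.trans (by exact_mod_cast hM)
      rw [abs_le] at hM'
      rw [min_eq_left hM'.2, max_eq_right hM'.1, sub_self, abs_zero]
  rw [integral_zero] at ht
  obtain ⟨M, hM⟩ := (ht.eventually (gt_mem_nhds hε)).exists
  exact ⟨_, hGi M, hM, hlim (G M) φ⟩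

/-- Compactness of Young measures: on a finite measure space with
separable `L¹`, any sequence of Young measures with a uniform `p`-th moment bound
(`p ≥ 1`) admits a subsequence converging to a Young measure `ν`, in the sense that
`∫ h(z) ∫ φ dν^n_z dλ → ∫ h(z) ∫ φ dν_z dλ` for all `h ∈ L¹(X,λ)` and all bounded
continuous `φ`. -/
theorem youngMeasure_compactness
    {X : Type*} [MeasurableSpace X] (lam : Measure X) [IsFiniteMeasure lam]
    (hsep : TopologicalSpace.SeparableSpace (MeasureTheory.Lp ℝ 1 lam))
    (p : ℝ) (hp : 1 ≤ p) (ν : ℕ → X → Measure ℝ)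
    (hY : ∀ n, IsYoungMeasure (ν n))
    (hmom : ∃ C : ℝ≥0∞, C ≠ ⊤ ∧
      ∀ n, (∫⁻ z, (∫⁻ ξ, ENNReal.ofReal (|ξ| ^ p) ∂(ν n z)) ∂lam) ≤ C) :
    ∃ (νl : X → Measure ℝ) (s : ℕ → ℕ), IsYoungMeasure νl ∧ StrictMono s ∧
      ∀ h : X → ℝ, Integrable h lam → ∀ φ : BoundedContinuousFunction ℝ ℝ,
        Tendsto (fun k => ∫ z, h z * ∫ ξ, φ ξ ∂(ν (s k) z) ∂lam) atTop
          (𝓝 (∫ z, h z * ∫ ξ, φ ξ ∂(νl z) ∂lam)) := by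
  rcases eq_zero_or_neZero lam with h0 | h0
  · exact ⟨ν 0, id, hY 0, strictMono_id, by simp [h0]⟩
  obtain ⟨C, hC, hmom⟩ := hmom
  have hu0 : lam Set.univ ≠ 0 := by simp [h0.out]
  have hut : lam Set.univ ≠ ⊤ := measure_ne_top _ _
  set c : ℝ≥0∞ := (lam Set.univ)⁻¹ with hc
  have hc0 : c ≠ 0 := by simpa [hc] using hut
  have hct : c ≠ ⊤ := by simpa [hc] using hu0
  have hcr : 0 < c.toReal := ENNReal.toReal_pos hc0 hct
  have : IsProbabilityMeasure (c • lam) := inferInstanceAs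
    (IsProbabilityMeasure ((lam Set.univ)⁻¹ • lam))
  have hii : ∀ g : X → ℝ, Integrable g (c • lam) ↔ Integrable g lam :=
    fun g => integrable_smul_measure hc0 hct
  let d := TopologicalSpace.denseSeq (Lp ℝ 1 lam)
  obtain ⟨νl, s, h1, h2, h3⟩ := young_prob (c • lam) (fun i => (d i : X → ℝ))
    (fun i => (Lp.stronglyMeasurable (d i)).measurable)
    (fun i => (hii _).2 (L1.integrable_coeFn (d i)))
    (by
      intro g hg ε hε
      have hg' := (hii g).1 hg
      obtain ⟨i, hi⟩ := (TopologicalSpace.denseRange_denseSeq (Lp ℝ 1 lam)).exists_dist_lt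
        (hg'.toL1 g) (ε := ε / c.toReal) (by positivity)
      refine ⟨i, ?_⟩
      rw [integral_smul_measure, smul_eq_mul]
      rw [lt_div_iff₀ hcr, mul_comm, L1.dist_eq_integral_dist] at hi
      refine lt_of_eq_of_lt ?_ hi
      congr 1
      refine integral_congr_ae ?_
      filter_upwards [hg'.coeFn_toL1] with x hx
      rw [hx, Real.dist_eq])
    p hp ν hY (c * C) (ENNReal.mul_ne_top hct hC) (by
      intro n
      rw [lintegral_smul_measure, smul_eq_mul]
      gcongr
      exact hmom n)
  refine ⟨νl, s, h1, h2, fun h hh φ => ?_⟩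
  have h4 := (h3 h ((hii h).2 hh) φ).const_mul (c.toReal)⁻¹
  simp only [integral_smul_measure, smul_eq_mul] at h4
  simpa only [inv_mul_cancel_left₀ hcr.ne'] using h4
end
end

section
/- Let (X, λ) be a finite measure space, let p ≥ 1, and let u_n, u : X → ℝ be measurable functions with sup_n ∫_X |u_n(z)|^p dλ(z) < +∞ and ∫_X |u(z)|^p dλ(z) < +∞. Define f_n(z,ξ) = 1_{u_n(z) > ξ} and f(z,ξ) = 1_{u(z) > ξ}, and assume f_n → f weak-* in L^∞(X × ℝ, λ ⊗ Leb), i.e. for every g ∈ L¹(X × ℝ, λ ⊗ Leb): ∫∫ f_n g dλ dξ → ∫∫ f g dλ dξ. Then for every q with 1 ≤ q < p, u_n → u strongly in L^q(X, λ). -/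
open MeasureTheory Filter Set
open scoped ENNReal Topology

noncomputable section

/-- Pointwise splitting into a bounded part and a tail part. -/
lemma aux_pointwise (p q R a b : ℝ) (hq1 : 1 ≤ q) (hqp : q < p) (hR : 1 ≤ R) :
    ENNReal.ofReal (|a - b| ^ q) ≤
      ENNReal.ofReal ((2 * R) ^ (q - 1)) *
        (∫⁻ x : ℝ, ENNReal.ofReal ((Icc (-R) R).indicator (fun x =>
          (if x < a then (1 : ℝ) else 0) * (1 - 2 * (if x < b then (1 : ℝ) else 0))
            + (if x < b then (1 : ℝ) else 0)) x)) +
      ENNReal.ofReal (2 ^ q * R ^ (q - p)) *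
        (ENNReal.ofReal (|a| ^ p) + ENNReal.ofReal (|b| ^ p)) := by
  have hR0 : 0 < R := by linarith
  by_cases hab : |a| ≤ R ∧ |b| ≤ R
  · obtain ⟨ha, hb⟩ := hab
    refine le_trans ?_ le_self_add
    have h1 : |a - b| ^ q ≤ (2 * R) ^ (q - 1) * |a - b| := by
      rcases eq_or_lt_of_le (abs_nonneg (a - b)) with h0 | h0
      · rw [← h0, Real.zero_rpow (by linarith)]; simp
      · have h2 : |a - b| ≤ 2 * R := by
          have := abs_sub a b
          linarith
        calc |a - b| ^ q = |a - b| ^ (q - 1) * |a - b| := by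
              rw [← Real.rpow_add_one h0.ne']; congr 1; ring
          _ ≤ _ := by
              gcongr
    refine (ENNReal.ofReal_le_ofReal h1).trans ?_
    rw [ENNReal.ofReal_mul (by positivity)]
    gcongr
    have h3 : ENNReal.ofReal |a - b| = volume (Ico (min a b) (max a b)) := by
      rw [Real.volume_Ico, max_sub_min_eq_abs']
    rw [h3, ← lintegral_indicator_one measurableSet_Ico]
    apply lintegral_mono
    intro x
    simp only [indicator_apply]
    split_ifs with hx <;> simp_all [abs_le] <;> grind
  · refine le_trans ?_ le_add_self
    rw [← ENNReal.ofReal_add (by positivity) (by positivity),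
      ← ENNReal.ofReal_mul (by positivity)]
    apply ENNReal.ofReal_le_ofReal
    set M := max |a| |b| with hM
    have hMR : R < M := by
      rw [hM, lt_max_iff]
      by_contra! h
      exact hab h
    have hM0 : 0 < M := by linarith
    have h1 : |a - b| ≤ 2 * M := by
      have := abs_sub a b
      have := le_max_left |a| |b|
      have := le_max_right |a| |b|
      linarith
    have h2 : M ^ p ≤ |a| ^ p + |b| ^ p := by
      have ha : 0 ≤ |a| ^ p := by positivity
      have hb : 0 ≤ |b| ^ p := by positivity
      rcases max_choice |a| |b| with h | h <;> rw [hM, h] <;> linarith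
    calc |a - b| ^ q ≤ (2 * M) ^ q := by gcongr
      _ = 2 ^ q * (M ^ (q - p) * M ^ p) := by
          rw [Real.mul_rpow (by norm_num) hM0.le, ← Real.rpow_add hM0]; congr 2; ring
      _ ≤ 2 ^ q * (R ^ (q - p) * (|a| ^ p + |b| ^ p)) := by
          have : M ^ (q - p) ≤ R ^ (q - p) :=
            Real.rpow_le_rpow_of_nonpos hR0 hMR.le (by linarith)
          gcongr
      _ = _ := by ring

/-- Reduction of weak-* convergence of equilibrium kinetic
functions to strong convergence: if `u_n, u : X → ℝ` are measurable with a uniform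
`p`-th moment bound and the kinetic functions `1_{u_n > ξ}` converge weak-* in
`L^∞(X × ℝ)` to `1_{u > ξ}`, then `u_n → u` strongly in `L^q(X,λ)` for every
`1 ≤ q < p`, i.e. `∫ |u_n - u|^q dλ → 0`. -/
theorem equilibrium_weakStar_to_strong
    {X : Type*} [MeasurableSpace X] (lam : Measure X) [IsFiniteMeasure lam]
    (p : ℝ) (hp : 1 ≤ p) (u : ℕ → X → ℝ) (v : X → ℝ)
    (humeas : ∀ n, Measurable (u n)) (hvmeas : Measurable v)
    (hmom : ∃ C : ℝ≥0∞, C ≠ ⊤ ∧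
      ∀ n, (∫⁻ z, ENNReal.ofReal (|u n z| ^ p) ∂lam) ≤ C)
    (hvmom : (∫⁻ z, ENNReal.ofReal (|v z| ^ p) ∂lam) ≠ ⊤)
    (hweak : ∀ g : X × ℝ → ℝ, Integrable g (lam.prod volume) →
      Tendsto
        (fun n => ∫ q : X × ℝ,
          (if q.2 < u n q.1 then (1 : ℝ) else 0) * g q ∂(lam.prod volume)) atTop
        (𝓝 (∫ q : X × ℝ,
          (if q.2 < v q.1 then (1 : ℝ) else 0) * g q ∂(lam.prod volume))))
    (q : ℝ) (hq1 : 1 ≤ q) (hqp : q < p) :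
    Tendsto (fun n => ∫⁻ z, ENNReal.ofReal (|u n z - v z| ^ q) ∂lam) atTop (𝓝 0) := by
  obtain ⟨C, hC, hmom⟩ := hmom
  -- the set where the limit kinetic function is one
  have hms : ∀ w : X → ℝ, Measurable w → MeasurableSet {y : X × ℝ | y.2 < w y.1} := fun w hw =>
    measurableSet_lt measurable_snd (hw.comp measurable_fst)
  have hmf : ∀ w : X → ℝ, Measurable w →
      Measurable (fun y : X × ℝ => if y.2 < w y.1 then (1 : ℝ) else 0) := fun w hw =>
    Measurable.ite (hms w hw) measurable_const measurable_const
  -- the localized L1 distance of the kinetic functions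
  have key : ∀ R : ℝ, Tendsto (fun n => ∫⁻ z, (∫⁻ x : ℝ,
      ENNReal.ofReal ((Icc (-R) R).indicator (fun x =>
          (if x < u n z then (1 : ℝ) else 0) * (1 - 2 * (if x < v z then (1 : ℝ) else 0))
            + (if x < v z then (1 : ℝ) else 0)) x)) ∂lam) atTop (𝓝 0) := by
    intro R
    have hS : MeasurableSet (univ ×ˢ Icc (-R) R : Set (X × ℝ)) :=
      MeasurableSet.univ.prod measurableSet_Icc
    have hSfin : (lam.prod volume) (univ ×ˢ Icc (-R) R : Set (X × ℝ)) ≠ ⊤ := by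
      rw [Measure.prod_prod, Real.volume_Icc]
      exact ENNReal.mul_ne_top (measure_ne_top _ _) ENNReal.ofReal_ne_top
    have hint : ∀ F : X × ℝ → ℝ, Measurable F → (∀ y, |F y| ≤ 1) →
        Integrable ((univ ×ˢ Icc (-R) R : Set (X × ℝ)).indicator F) (lam.prod volume) := by
      intro F hF hb
      rw [integrable_indicator_iff hS]
      exact Measure.integrableOn_of_bounded (M := 1) hSfin hF.aestronglyMeasurable
        (Eventually.of_forall hb)
    set S := (univ ×ˢ Icc (-R) R : Set (X × ℝ)) with hSdef
    let f : X × ℝ → ℝ := fun y => if y.2 < v y.1 then (1 : ℝ) else 0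
    let g : X × ℝ → ℝ := S.indicator (fun y => 1 - 2 * f y)
    have hfm : Measurable f := hmf v hvmeas
    have hgi : Integrable g (lam.prod volume) := by
      apply hint
      · fun_prop
      · intro y
        simp only [f]
        split_ifs <;> norm_num
    have hfi : Integrable (S.indicator f) (lam.prod volume) := by
      apply hint _ hfm
      intro y
      simp only [f]
      split_ifs <;> norm_num
    have hfng : ∀ w : X → ℝ, Measurable w → Integrable (fun y : X × ℝ =>
        (if y.2 < w y.1 then (1 : ℝ) else 0) * g y) (lam.prod volume) := by
      intro w hw
      refine hgi.bdd_mul (c := 1) (hmf w hw).aestronglyMeasurable (Eventually.of_forall ?_)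
      intro y
      split_ifs <;> norm_num
    have h1 := (hweak g hgi).add_const (∫ y, S.indicator f y ∂(lam.prod volume))
    have h0 : (∫ y : X × ℝ, (if y.2 < v y.1 then (1 : ℝ) else 0) * g y ∂(lam.prod volume)) +
        (∫ y, S.indicator f y ∂(lam.prod volume)) = 0 := by
      rw [← integral_add (hfng v hvmeas) hfi]
      apply integral_eq_zero_of_ae
      refine Eventually.of_forall fun y => ?_
      simp only [g, f, indicator_apply, Pi.zero_apply]
      split_ifs <;> norm_num
    rw [h0] at h1
    have h2 := ENNReal.tendsto_ofReal h1
    rw [ENNReal.ofReal_zero] at h2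
    refine h2.congr fun n => ?_
    have hsum : Integrable (fun y : X × ℝ =>
        (if y.2 < u n y.1 then (1 : ℝ) else 0) * g y + S.indicator f y) (lam.prod volume) :=
      (hfng (u n) (humeas n)).add hfi
    rw [← integral_add (hfng (u n) (humeas n)) hfi,
      ofReal_integral_eq_lintegral_ofReal hsum]
    · rw [lintegral_prod]
      · refine lintegral_congr fun z => lintegral_congr fun x => ?_
        congr 1
        by_cases hx : x ∈ Icc (-R) R
        · have hx' : (z, x) ∈ S := ⟨mem_univ _, hx⟩
          simp only [g, f, indicator_of_mem hx, indicator_of_mem hx']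
        · have hx' : (z, x) ∉ S := fun h => hx h.2
          simp only [g, f, indicator_of_notMem hx, indicator_of_notMem hx', mul_zero, add_zero]
      · exact (hsum.aestronglyMeasurable.aemeasurable).ennreal_ofReal
    · refine Eventually.of_forall fun y => ?_
      simp only [g, f, indicator_apply, Pi.zero_apply]
      split_ifs <;> norm_num
  set K : ℝ≥0∞ := C + ∫⁻ z, ENNReal.ofReal (|v z| ^ p) ∂lam with hK
  have hKtop : K ≠ ⊤ := ENNReal.add_ne_top.2 ⟨hC, hvmom⟩
  rw [ENNReal.tendsto_nhds_zero]
  intro ε hε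
  have hε2 : 0 < ε / 2 := ENNReal.half_pos hε.ne'
  have htail : Tendsto (fun R : ℝ => ENNReal.ofReal (2 ^ q * R ^ (q - p)) * K) atTop (𝓝 0) := by
    have h1 : Tendsto (fun R : ℝ => R ^ (q - p)) atTop (𝓝 0) := by
      have := tendsto_rpow_neg_atTop (sub_pos.2 hqp)
      simpa using this
    have h2 := ENNReal.tendsto_ofReal (h1.const_mul (2 ^ q))
    have h3 := ENNReal.Tendsto.mul_const h2 (Or.inr hKtop)
    simpa using h3
  obtain ⟨R, hRε, hR1⟩ := (((ENNReal.tendsto_nhds_zero.1 htail) (ε / 2) hε2).and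
    (eventually_ge_atTop (1 : ℝ))).exists
  have hA := ENNReal.Tendsto.const_mul (a := ENNReal.ofReal ((2 * R) ^ (q - 1))) (key R)
    (Or.inr ENNReal.ofReal_ne_top)
  rw [mul_zero] at hA
  filter_upwards [(ENNReal.tendsto_nhds_zero.1 hA) (ε / 2) hε2] with n hn
  have hmu : Measurable (fun z => ENNReal.ofReal (|u n z| ^ p)) := by
    have := humeas n
    fun_prop
  have hmv : Measurable (fun z => ENNReal.ofReal (|v z| ^ p)) := by fun_prop
  calc ∫⁻ z, ENNReal.ofReal (|u n z - v z| ^ q) ∂lam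
      ≤ _ := lintegral_mono fun z => aux_pointwise p q R (u n z) (v z) hq1 hqp hR1
    _ = _ := lintegral_add_right _ ((hmu.add hmv).const_mul _)
    _ ≤ ε / 2 + ε / 2 := by
        refine add_le_add ?_ ?_
        · rw [lintegral_const_mul' _ _ ENNReal.ofReal_ne_top]
          exact hn
        · rw [lintegral_const_mul' _ _ ENNReal.ofReal_ne_top, lintegral_add_left hmu]
          refine le_trans ?_ hRε
          gcongr
          rw [hK]
          exact add_le_add (hmom n) le_rfl
    _ = ε := ENNReal.add_halves ε
end
end
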